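/- Let 𝔨 be a real Lie algebra, K₀ ⊆ 𝔨 a Lie subalgebra, and V ⊆ 𝔨 a linear subspace such that ⁅Z, Y⁆ ∈ V + K₀ for every Z ∈ K₀ and every Y ∈ V, and define K_j as in the Killing filtration. Let F : 𝔨 → 𝔨 be a Lie algebra automorphism such that F(K₀) ⊆ K₀ and F(Y) − Y ∈ K₀ for every Y ∈ V. Suppose Y ∈ 𝔨, j ≥ 0, and Z ∈ K_j are such that F(Y) − Y − Z ∈ K_{j+1}. Then for every natural number n one has Fⁿ(Y) − Y − n•Z ∈ K_{j+1}. -/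

import Mathlib

/-- The Killing filtration: `K 0 = K₀` and
`K (j+1) = {Z ∈ K₀ : ⁅Z, Y⁆ ∈ K j for all Y ∈ V}`. -/
def killingFiltration (𝔨 : Type*) [LieRing 𝔨] [LieAlgebra ℝ 𝔨]
    (K₀ : LieSubalgebra ℝ 𝔨) (V : Submodule ℝ 𝔨) : ℕ → Submodule ℝ 𝔨
  | 0 => K₀.toSubmodule
  | (j + 1) =>
    { carrier := {Z | Z ∈ K₀ ∧ ∀ Y ∈ V, ⁅Z, Y⁆ ∈ killingFiltration 𝔨 K₀ V j}
      add_mem' := by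
        rintro a b ⟨ha, ha'⟩ ⟨hb, hb'⟩
        refine ⟨K₀.add_mem ha hb, fun Y hY => ?_⟩
        rw [add_lie]
        exact (killingFiltration 𝔨 K₀ V j).add_mem (ha' Y hY) (hb' Y hY)
      zero_mem' := by
        refine ⟨K₀.zero_mem, fun Y hY => ?_⟩
        rw [zero_lie]
        exact (killingFiltration 𝔨 K₀ V j).zero_mem
      smul_mem' := by
        rintro c a ⟨ha, ha'⟩
        refine ⟨K₀.smul_mem c ha, fun Y hY => ?_⟩
        rw [smul_lie]
        exact (killingFiltration 𝔨 K₀ V j).smul_mem c (ha' Y hY) }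


theorem kf_succ_le {𝔨 : Type*} [LieRing 𝔨] [LieAlgebra ℝ 𝔨]
    (K₀ : LieSubalgebra ℝ 𝔨) (V : Submodule ℝ 𝔨) (j : ℕ) :
    ∀ Z ∈ killingFiltration 𝔨 K₀ V (j + 1), Z ∈ killingFiltration 𝔨 K₀ V j := by
  induction j with
  | zero => exact fun Z hZ => hZ.1
  | succ j ih => exact fun Z hZ => ⟨hZ.1, fun Y hY => ih _ (hZ.2 Y hY)⟩

theorem kf_le {𝔨 : Type*} [LieRing 𝔨] [LieAlgebra ℝ 𝔨]
    (K₀ : LieSubalgebra ℝ 𝔨) (V : Submodule ℝ 𝔨) (j : ℕ) :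
    ∀ Z ∈ killingFiltration 𝔨 K₀ V j, Z ∈ K₀ := by
  cases j with
  | zero => exact fun Z hZ => hZ
  | succ j => exact fun Z hZ => hZ.1

/-- Each `K j` is an ideal of `K₀`. -/
theorem kf_ideal {𝔨 : Type*} [LieRing 𝔨] [LieAlgebra ℝ 𝔨]
    (K₀ : LieSubalgebra ℝ 𝔨) (V : Submodule ℝ 𝔨)
    (hbr : ∀ Z ∈ K₀, ∀ Y ∈ V, ⁅Z, Y⁆ ∈ V ⊔ K₀.toSubmodule) (j : ℕ) :
    ∀ Z ∈ killingFiltration 𝔨 K₀ V j, ∀ W ∈ K₀, ⁅Z, W⁆ ∈ killingFiltration 𝔨 K₀ V j := by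
  induction j with
  | zero => exact fun Z hZ W hW => K₀.lie_mem hZ hW
  | succ j ih =>
    intro Z hZ W hW
    refine ⟨K₀.lie_mem hZ.1 hW, fun Y hY => ?_⟩
    obtain ⟨v, hv, k, hk, hvk⟩ := Submodule.mem_sup.1 (hbr W hW Y hY)
    have e : ⁅⁅Z, W⁆, Y⁆ = ⁅Z, v⁆ + ⁅Z, k⁆ + ⁅⁅Z, Y⁆, W⁆ := by
      rw [lie_lie, ← hvk, lie_add, ← lie_skew W ⁅Z, Y⁆, sub_neg_eq_add]
    rw [e]
    exact add_mem (add_mem (hZ.2 v hv) (ih Z (kf_succ_le K₀ V j Z hZ) k hk))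
      (ih _ (hZ.2 Y hY) W hW)

/-- `F` acts trivially on the graded pieces. -/
theorem kf_map_sub {𝔨 : Type*} [LieRing 𝔨] [LieAlgebra ℝ 𝔨]
    (K₀ : LieSubalgebra ℝ 𝔨) (V : Submodule ℝ 𝔨)
    (hbr : ∀ Z ∈ K₀, ∀ Y ∈ V, ⁅Z, Y⁆ ∈ V ⊔ K₀.toSubmodule)
    (F : 𝔨 ≃ₗ⁅ℝ⁆ 𝔨)
    (hF0 : ∀ Z ∈ K₀, F Z ∈ K₀)
    (hFV : ∀ Y ∈ V, F Y - Y ∈ K₀) (j : ℕ) :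
    ∀ Z ∈ killingFiltration 𝔨 K₀ V j, F Z - Z ∈ killingFiltration 𝔨 K₀ V (j + 1) := by
  have e : ∀ Z Y : 𝔨, ⁅F Z - Z, Y⁆ = (F ⁅Z, Y⁆ - ⁅Z, Y⁆) - ⁅F Z, F Y - Y⁆ := by
    intro Z Y
    rw [LieEquiv.map_lie, sub_lie, lie_sub]
    abel
  induction j with
  | zero =>
    intro Z hZ
    have hZ' : Z ∈ K₀ := hZ
    refine ⟨K₀.sub_mem (hF0 Z hZ') hZ', fun Y hY => ?_⟩
    obtain ⟨v, hv, k, hk, hvk⟩ := Submodule.mem_sup.1 (hbr Z hZ' Y hY)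
    have hk' : k ∈ K₀ := hk
    rw [e]
    refine K₀.sub_mem ?_ (K₀.lie_mem (hF0 Z hZ') (hFV Y hY))
    have e2 : F ⁅Z, Y⁆ - ⁅Z, Y⁆ = (F v - v) + (F k - k) := by
      rw [← hvk, map_add]
      abel
    rw [e2]
    exact K₀.add_mem (hFV v hv) (K₀.sub_mem (hF0 k hk') hk')
  | succ j ih =>
    intro Z hZ
    refine ⟨K₀.sub_mem (hF0 Z hZ.1) hZ.1, fun Y hY => ?_⟩
    rw [e]
    have hFZ : F Z ∈ killingFiltration 𝔨 K₀ V (j + 1) := by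
      have := add_mem (ih Z (kf_succ_le K₀ V j Z hZ)) hZ
      rwa [sub_add_cancel] at this
    exact sub_mem (ih _ (hZ.2 Y hY)) (kf_ideal K₀ V hbr (j + 1) _ hFZ _ (hFV Y hY))

/-- if `F(Y) − Y − Z ∈ K_{j+1}` with `Z ∈ K_j`, then
`Fⁿ(Y) − Y − n•Z ∈ K_{j+1}` for every `n`. -/
theorem iterate_sub_nsmul_mem_killingFiltration {𝔨 : Type*} [LieRing 𝔨] [LieAlgebra ℝ 𝔨]
    (K₀ : LieSubalgebra ℝ 𝔨) (V : Submodule ℝ 𝔨)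
    (hbr : ∀ Z ∈ K₀, ∀ Y ∈ V, ⁅Z, Y⁆ ∈ V ⊔ K₀.toSubmodule)
    (F : 𝔨 ≃ₗ⁅ℝ⁆ 𝔨)
    (hF0 : ∀ Z ∈ K₀, F Z ∈ K₀)
    (hFV : ∀ Y ∈ V, F Y - Y ∈ K₀)
    (Y : 𝔨) (j : ℕ) (Z : 𝔨) (hZ : Z ∈ killingFiltration 𝔨 K₀ V j)
    (h : F Y - Y - Z ∈ killingFiltration 𝔨 K₀ V (j + 1)) :
    ∀ n : ℕ, (⇑F)^[n] Y - Y - n • Z ∈ killingFiltration 𝔨 K₀ V (j + 1) := by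
  have key := kf_map_sub K₀ V hbr F hF0 hFV
  intro n
  induction n with
  | zero => simp
  | succ n ih =>
    have h1 : F ((⇑F)^[n] Y - Y - n • Z) ∈ killingFiltration 𝔨 K₀ V (j + 1) := by
      have := add_mem (kf_succ_le K₀ V (j + 1) _ (key (j + 1) _ ih)) ih
      rwa [sub_add_cancel] at this
    have e : (⇑F)^[n + 1] Y - Y - (n + 1) • Z
        = F ((⇑F)^[n] Y - Y - n • Z) + (F Y - Y - Z) + n • (F Z - Z) := by
      rw [Function.iterate_succ_apply', map_sub, map_sub, map_nsmul, succ_nsmul, nsmul_sub]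
      abel
    rw [e]
    exact add_mem (add_mem h1 h) (nsmul_mem (key j Z hZ) n)
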